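/- There exist constants c₀ > 0 and n₀ such that the following holds. Let n ≥ n₀, let L be a positive integer with L < 0.5·n^{1/2}, let W = W(n, L), and let S ⊆ Z_n be a set with #S · #𝓛 > c₀ · n (log n)^{2} / log log n. Then every u ∈ Z_n can be represented as u = s + t + w with s, t ∈ S and w ∈ W; in particular W + S + S = Z_n. -/

import Mathlib

/-- The set `𝓛 = 𝓛(n, L)` of primes `ℓ` with `L < ℓ ≤ 2L` and `gcd(ℓ, n) = 1`. -/
def calL (n L : ℕ) : Finset ℕ :=
  (Finset.Ioc L (2 * L)).filter fun ℓ => Nat.Prime ℓ ∧ Nat.Coprime ℓ n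

/-- The set `W = W(n, L) = {k·ℓ⁻¹ mod n : 1 ≤ k ≤ L, ℓ ∈ 𝓛} ⊆ Z_n`. -/
def calW (n L : ℕ) : Finset (ZMod n) :=
  ((Finset.Icc 1 L) ×ˢ calL n L).image fun p => (p.1 : ZMod n) * (p.2 : ZMod n)⁻¹

/-!
The number of ways to write `u = s + t + k ℓ⁻¹` is a Fourier sum over the characters of `Z_n`. The
trivial character contributes `#S² L #𝓛 / n`, and by Parseval the others contribute at most `#S`
times the largest value of `|∑_ℓ ∑_k e(a k ℓ⁻¹ / n)|` over `a ≠ 0`. For fixed `ℓ`, let `b` be the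
least absolute residue of `a ℓ⁻¹`, so that `ℓ b = a + m n` for some integer `|m| ≤ L`; the geometric
sum over `k` is then `O(L / (1 + |m|))`. All primes `ℓ` with `|m| = j` divide the nonzero integer
`a² - (j n)²`, which is at most `n⁴` in absolute value, so there are at most `4 log n / log L` of
them. Summing over `j ≤ L` gives `O(L (log n)² / log L)`. The size hypothesis forces `L > log n`,
which turns `log L` into `log log n`; one may assume `L < n`, as otherwise `W` is all of `Z_n`.
-/

open Finset Real

section Characters

variable {G ι : Type*} [AddCommGroup G]

theorem norm_sum_addChar_le_card [Finite G] (ψ : AddChar G ℂ) (I : Finset ι) (w : ι → G) :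
    ‖∑ i ∈ I, ψ (w i)‖ ≤ #I := by
  simpa [AddChar.norm_apply] using norm_sum_le I fun i => ψ (w i)

theorem sum_addChar_eq_zero_of_forall_ne [Finite G] {S T : Finset G} {I : Finset ι} {w : ι → G}
    {u : G} (hu : ∀ s ∈ S, ∀ t ∈ T, ∀ i ∈ I, u ≠ s + t + w i) :
    ∑ ψ : AddChar G ℂ, (∑ s ∈ S, ψ s) * (∑ t ∈ T, ψ t) * (∑ i ∈ I, ψ (w i)) * ψ (-u) = 0 := by
  have expand (ψ : AddChar G ℂ) :
      (∑ s ∈ S, ψ s) * (∑ t ∈ T, ψ t) * (∑ i ∈ I, ψ (w i)) * ψ (-u) =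
        ∑ s ∈ S, ∑ t ∈ T, ∑ i ∈ I, ψ (s + t + w i - u) := by
    rw [sum_mul_sum]
    simp_rw [sum_mul, mul_sum, sum_mul, sub_eq_add_neg, AddChar.map_add_eq_mul]
  simp only [expand]
  rw [sum_comm]
  refine sum_eq_zero fun s hs => ?_
  rw [sum_comm]
  refine sum_eq_zero fun t ht => ?_
  rw [sum_comm]
  refine sum_eq_zero fun i hi => ?_
  exact AddChar.sum_apply_eq_zero_iff_ne_zero.2 (sub_ne_zero.2 (hu s hs t ht i hi).symm)

variable [Fintype G]

theorem sum_norm_sq_sum_addChar (S : Finset G) :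
    ∑ ψ : AddChar G ℂ, ‖∑ s ∈ S, ψ s‖ ^ 2 = Fintype.card G * #S := by
  classical
  have norm_sq (ψ : AddChar G ℂ) :
      ((‖∑ s ∈ S, ψ s‖ ^ 2 : ℝ) : ℂ) = ∑ s ∈ S, ∑ t ∈ S, ψ (s - t) := by
    rw [Complex.ofReal_pow, ← Complex.mul_conj', map_sum, sum_mul_sum]
    simp only [← AddChar.map_neg_eq_conj, ← AddChar.map_add_eq_mul, sub_eq_add_neg]
  have orthogonality (s : G) (hs : s ∈ S) :
      ∑ t ∈ S, ∑ ψ : AddChar G ℂ, ψ (s - t) = Fintype.card G := by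
    simp only [AddChar.sum_apply_eq_ite, sub_eq_zero, sum_ite_eq, if_pos hs]
  apply Complex.ofReal_injective
  rw [Complex.ofReal_sum]
  simp only [norm_sq]
  rw [sum_comm, sum_congr rfl fun s hs => sum_comm.trans (orthogonality s hs)]
  simp [mul_comm]

theorem sum_norm_mul_norm_sum_addChar_le (S T : Finset G) :
    ∑ ψ : AddChar G ℂ, ‖∑ s ∈ S, ψ s‖ * ‖∑ t ∈ T, ψ t‖ ≤ Fintype.card G * √(#S * #T) := by
  calc
    _ ≤ √(Fintype.card G * #S) * √(Fintype.card G * #T) := by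
      simpa only [sum_norm_sq_sum_addChar] using
        sum_mul_le_sqrt_mul_sqrt univ (fun ψ : AddChar G ℂ => ‖∑ s ∈ S, ψ s‖)
          (fun ψ => ‖∑ t ∈ T, ψ t‖)
    _ = Fintype.card G * √(#S * #T) := by
      rw [← sqrt_mul (by positivity), mul_mul_mul_comm, sqrt_mul (by positivity),
        sqrt_mul_self (by positivity)]

theorem exists_eq_add_add_of_norm_sum_addChar_le {S T : Finset G} {I : Finset ι} {w : ι → G}
    {B : ℝ} (hB₀ : 0 ≤ B) (hB : ∀ ψ : AddChar G ℂ, ψ ≠ 0 → ‖∑ i ∈ I, ψ (w i)‖ ≤ B)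
    (hcard : B * Fintype.card G < √(#S * #T) * #I) (u : G) :
    ∃ s ∈ S, ∃ t ∈ T, ∃ i ∈ I, u = s + t + w i := by
  classical
  by_contra! hu
  have vanish := sum_addChar_eq_zero_of_forall_ne hu
  rw [← add_sum_erase _ _ (mem_univ 0), add_eq_zero_iff_eq_neg] at vanish
  have main_term_le : (#S * #T * #I : ℝ) ≤ B * (Fintype.card G * √(#S * #T)) := by
    calc
      (#S * #T * #I : ℝ) = ‖∑ ψ ∈ univ.erase (0 : AddChar G ℂ),
          (∑ s ∈ S, ψ s) * (∑ t ∈ T, ψ t) * (∑ i ∈ I, ψ (w i)) * ψ (-u)‖ := by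
        rw [← norm_neg, ← vanish]
        simp
      _ ≤ ∑ ψ ∈ univ.erase (0 : AddChar G ℂ), B * (‖∑ s ∈ S, ψ s‖ * ‖∑ t ∈ T, ψ t‖) := by
        refine norm_sum_le_of_le _ fun ψ hψ => ?_
        rw [norm_mul, norm_mul, norm_mul, AddChar.norm_apply, mul_one, mul_comm B]
        gcongr
        exact hB ψ (ne_of_mem_erase hψ)
      _ ≤ B * ∑ ψ : AddChar G ℂ, ‖∑ s ∈ S, ψ s‖ * ‖∑ t ∈ T, ψ t‖ := by
        rw [← mul_sum]
        gcongr
        exact erase_subset _ _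
      _ ≤ B * (Fintype.card G * √(#S * #T)) := by
        gcongr
        exact sum_norm_mul_norm_sum_addChar_le S T
  have sqrt_pos : 0 < √(#S * #T : ℝ) := by
    refine pos_of_mul_pos_left (lt_of_le_of_lt ?_ hcard) (Nat.cast_nonneg _)
    positivity
  refine main_term_le.not_gt ?_
  calc
    B * (Fintype.card G * √(#S * #T)) = √(#S * #T) * (B * Fintype.card G) := by ring
    _ < √(#S * #T) * (√(#S * #T) * #I) := by gcongr
    _ = #S * #T * #I := by rw [← mul_assoc, mul_self_sqrt (by positivity)]

end Characters

theorem exists_eq_stdAddChar_mul {n : ℕ} [NeZero n] {ψ : AddChar (ZMod n) ℂ} (hψ : ψ ≠ 0) :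
    ∃ a : ZMod n, a ≠ 0 ∧ ∀ x, ψ x = ZMod.stdAddChar (a * x) := by
  obtain ⟨a, rfl⟩ := AddChar.zmodAddEquiv.surjective ψ
  exact ⟨a, by simpa only [ne_eq, EmbeddingLike.map_eq_zero_iff] using hψ, fun _ => rfl⟩

section GeometricSums

theorem norm_sub_one_mul_norm_sum_pow_le_two {z : ℂ} (hz : ‖z‖ = 1) (L : ℕ) :
    ‖z - 1‖ * ‖∑ k ∈ Icc 1 L, z ^ k‖ ≤ 2 := by
  have telescope : (∑ k ∈ Icc 1 L, z ^ k) * (z - 1) = z ^ (L + 1) - z ^ 1 :=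
    geom_sum_Ico_mul z L.succ_pos
  rw [mul_comm, ← norm_mul, telescope]
  exact (norm_sub_le _ _).trans (by norm_num [hz])

variable {n : ℕ} [NeZero n]

theorem two_mul_natAbs_valMinAbs_le (a : ZMod n) : 2 * a.valMinAbs.natAbs ≤ n := by
  have := a.natAbs_valMinAbs_le
  lia

theorem four_mul_natAbs_valMinAbs_le (b : ZMod n) :
    4 * (b.valMinAbs.natAbs : ℝ) ≤ n * ‖ZMod.stdAddChar b - 1‖ := by
  have hn : (0 : ℝ) < n := Nat.cast_pos.2 (NeZero.pos n)
  set x : ℝ := (b.valMinAbs : ℝ) with hx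
  have natAbs_eq : (b.valMinAbs.natAbs : ℝ) = |x| := by rw [Nat.cast_natAbs, Int.cast_abs]
  have abs_angle : |π * x / n| = π * |x| / n := by
    rw [abs_div, abs_mul, abs_of_pos pi_pos, Nat.abs_cast]
  have abs_angle_le : |π * x / n| ≤ π / 2 := by
    have : 2 * |x| ≤ n := by
      rw [← natAbs_eq]
      exact_mod_cast two_mul_natAbs_valMinAbs_le b
    rw [abs_angle, div_le_div_iff₀ hn two_pos]
    nlinarith [pi_pos]
  have char_eq : ZMod.stdAddChar b = Complex.exp (Complex.I * ((2 * (π * x / n) : ℝ) : ℂ)) := by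
    conv_lhs => rw [← b.coe_valMinAbs, ZMod.stdAddChar_coe]
    congr 1
    push_cast [hx]
    ring
  calc
    4 * (b.valMinAbs.natAbs : ℝ) = n * (2 * (2 / π * |π * x / n|)) := by
      rw [natAbs_eq, abs_angle]
      field_simp
      ring
    _ ≤ n * (2 * |sin (π * x / n)|) := by
      gcongr
      exact mul_abs_le_abs_sin abs_angle_le
    _ = n * ‖ZMod.stdAddChar b - 1‖ := by
      rw [char_eq, Complex.norm_exp_I_mul_ofReal_sub_one, norm_eq_abs, abs_mul, abs_two,
        mul_div_cancel_left₀ _ two_ne_zero]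

theorem two_mul_natAbs_valMinAbs_mul_norm_sum_stdAddChar_le (b : ZMod n) (L : ℕ) :
    2 * (b.valMinAbs.natAbs : ℝ) * ‖∑ k ∈ Icc 1 L, ZMod.stdAddChar (b * (k : ZMod n))‖ ≤ n := by
  have char_mul (k : ℕ) : ZMod.stdAddChar (b * (k : ZMod n)) = ZMod.stdAddChar b ^ k := by
    rw [← AddChar.map_nsmul_eq_pow, nsmul_eq_mul, mul_comm]
  simp only [char_mul]
  have geometric := norm_sub_one_mul_norm_sum_pow_le_two
    (AddChar.norm_apply ZMod.stdAddChar b) L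
  have := mul_le_mul_of_nonneg_right (four_mul_natAbs_valMinAbs_le b)
    (norm_nonneg (∑ k ∈ Icc 1 L, ZMod.stdAddChar b ^ k))
  have := mul_le_mul_of_nonneg_left geometric n.cast_nonneg (α := ℝ)
  linarith

end GeometricSums

section Carry

variable {n : ℕ}

/-- The integer `m` in `ℓ b = a + m n`, where `a` and `b` are the least absolute residues of the
class `a` and of its quotient by `ℓ`. It measures how far `a` must be shifted to become divisible by
`ℓ`. The division is exact when `ℓ` is coprime to `n`. -/
def carry (a : ZMod n) (ℓ : ℕ) : ℤ :=
  (ℓ * (a * (ℓ : ZMod n)⁻¹).valMinAbs - a.valMinAbs) / n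

theorem mul_valMinAbs_mul_inv (a : ZMod n) {ℓ : ℕ} (hℓ : ℓ.Coprime n) :
    ℓ * (a * (ℓ : ZMod n)⁻¹).valMinAbs = a.valMinAbs + carry a ℓ * n := by
  have : (n : ℤ) ∣ ℓ * (a * (ℓ : ZMod n)⁻¹).valMinAbs - a.valMinAbs := by
    rw [← ZMod.intCast_zmod_eq_zero_iff_dvd]
    push_cast [ZMod.coe_valMinAbs]
    linear_combination a * ZMod.coe_mul_inv_eq_one ℓ hℓ
  rw [carry, Int.ediv_mul_cancel this]
  ring

theorem dvd_valMinAbs_sq_sub_natAbs_carry_mul_sq (a : ZMod n) {ℓ : ℕ} (hℓ : ℓ.Coprime n) :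
    (ℓ : ℤ) ∣ a.valMinAbs ^ 2 - ((carry a ℓ).natAbs * n) ^ 2 := by
  rw [mul_pow, Int.natAbs_sq, ← mul_pow, sq_sub_sq, ← mul_valMinAbs_mul_inv a hℓ, mul_assoc]
  exact dvd_mul_right _ _

theorem natAbs_carry_mul_le_add (a : ZMod n) {ℓ : ℕ} (hℓ : ℓ.Coprime n) :
    (carry a ℓ).natAbs * n ≤
      ℓ * (a * (ℓ : ZMod n)⁻¹).valMinAbs.natAbs + a.valMinAbs.natAbs := by
  calc
    (carry a ℓ).natAbs * n = (ℓ * (a * (ℓ : ZMod n)⁻¹).valMinAbs - a.valMinAbs).natAbs := by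
      rw [mul_valMinAbs_mul_inv a hℓ, add_sub_cancel_left, Int.natAbs_mul, Int.natAbs_natCast]
    _ ≤ _ := by
      refine (Int.natAbs_sub_le _ _).trans ?_
      rw [Int.natAbs_mul, Int.natAbs_natCast]

variable [NeZero n]

theorem two_mul_natAbs_carry_le (a : ZMod n) {ℓ : ℕ} (hℓ : ℓ.Coprime n) :
    2 * (carry a ℓ).natAbs ≤ ℓ + 1 := by
  refine Nat.le_of_mul_le_mul_right ?_ (NeZero.pos n)
  nlinarith [natAbs_carry_mul_le_add a hℓ, two_mul_natAbs_valMinAbs_le a,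
    two_mul_natAbs_valMinAbs_le (a * (ℓ : ZMod n)⁻¹)]

theorem natAbs_carry_mul_le (a : ZMod n) {ℓ : ℕ} (hℓ : ℓ.Coprime n) :
    (carry a ℓ).natAbs * n ≤ 2 * ℓ * (a * (ℓ : ZMod n)⁻¹).valMinAbs.natAbs := by
  rcases Nat.eq_zero_or_pos (carry a ℓ).natAbs with hm | hm
  · simp [hm]
  · nlinarith [natAbs_carry_mul_le_add a hℓ, two_mul_natAbs_valMinAbs_le a]

theorem natAbs_carry_mul_norm_sum_stdAddChar_le (a : ZMod n) {ℓ : ℕ} (hℓ : ℓ.Coprime n) (L : ℕ) :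
    (carry a ℓ).natAbs * ‖∑ k ∈ Icc 1 L, ZMod.stdAddChar (a * (ℓ : ZMod n)⁻¹ * (k : ZMod n))‖ ≤
      ℓ := by
  set b := a * (ℓ : ZMod n)⁻¹
  set Q := ‖∑ k ∈ Icc 1 L, ZMod.stdAddChar (b * (k : ZMod n))‖
  have hn : (0 : ℝ) < n := Nat.cast_pos.2 (NeZero.pos n)
  have carry_mul_le : ((carry a ℓ).natAbs * n : ℝ) ≤ 2 * ℓ * b.valMinAbs.natAbs := by
    exact_mod_cast natAbs_carry_mul_le a hℓ
  refine le_of_mul_le_mul_right ?_ hn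
  calc
    (carry a ℓ).natAbs * Q * n = (carry a ℓ).natAbs * n * Q := by ring
    _ ≤ 2 * ℓ * b.valMinAbs.natAbs * Q := by gcongr
    _ = ℓ * (2 * b.valMinAbs.natAbs * Q) := by ring
    _ ≤ ℓ * n := by
      gcongr
      exact two_mul_natAbs_valMinAbs_mul_norm_sum_stdAddChar_le b L

theorem norm_sum_stdAddChar_mul_mul_inv_le (a : ZMod n) {ℓ L : ℕ} (hℓ : ℓ.Coprime n)
    (hℓL : ℓ ≤ 2 * L) :
    ‖∑ k ∈ Icc 1 L, ZMod.stdAddChar (a * ((k : ZMod n) * (ℓ : ZMod n)⁻¹))‖ ≤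
      3 * L * (1 / (1 + (carry a ℓ).natAbs)) := by
  have reorder (k : ℕ) : a * ((k : ZMod n) * (ℓ : ZMod n)⁻¹) = a * (ℓ : ZMod n)⁻¹ * k := by ring
  simp only [reorder]
  rw [mul_one_div, le_div_iff₀ (by positivity)]
  have hℓL' : (ℓ : ℝ) ≤ 2 * L := by exact_mod_cast hℓL
  have trivial_bound := norm_sum_addChar_le_card ZMod.stdAddChar (Icc 1 L)
    fun k => a * (ℓ : ZMod n)⁻¹ * (k : ZMod n)
  rw [Nat.card_Icc, add_tsub_cancel_right] at trivial_bound
  have carry_bound := natAbs_carry_mul_norm_sum_stdAddChar_le a hℓ L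
  linarith

end Carry

section Counting

theorem card_le_log_div_log_of_forall_prime_dvd {P : Finset ℕ} {L N : ℕ} (hL : 1 < L)
    (hN : N ≠ 0) (hP : ∀ p ∈ P, p.Prime ∧ L ≤ p ∧ p ∣ N) : #P ≤ log N / log L := by
  have prod_dvd : ∏ p ∈ P, p ∣ N :=
    prod_primes_dvd N (fun p hp => (hP p hp).1.prime) fun p hp => (hP p hp).2.2
  have pow_le : L ^ #P ≤ N :=
    (pow_card_le_prod _ _ _ fun p hp => (hP p hp).2.1).trans
      (Nat.le_of_dvd (Nat.pos_of_ne_zero hN) prod_dvd)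
  rw [le_div_iff₀ (log_pos (by exact_mod_cast hL)), ← log_pow]
  exact log_le_log (by positivity) (by exact_mod_cast pow_le)

theorem sum_comp_le_mul_sum {ι κ : Type*} [DecidableEq κ] {s : Finset ι} {t : Finset κ}
    {m : ι → κ} {g : κ → ℝ} {C : ℝ} (hm : ∀ i ∈ s, m i ∈ t) (hg : ∀ j ∈ t, 0 ≤ g j)
    (hC : ∀ j ∈ t, #{i ∈ s | m i = j} ≤ C) : ∑ i ∈ s, g (m i) ≤ C * ∑ j ∈ t, g j := by
  calc
    ∑ i ∈ s, g (m i) = ∑ j ∈ t, #{i ∈ s | m i = j} * g j := by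
      rw [← sum_fiberwise_of_maps_to' hm]
      simp only [sum_const, nsmul_eq_mul]
    _ ≤ ∑ j ∈ t, C * g j :=
      sum_le_sum fun j hj => mul_le_mul_of_nonneg_right (hC j hj) (hg j hj)
    _ = C * ∑ j ∈ t, g j := (mul_sum _ _ _).symm

theorem sum_range_one_div_one_add_le (N : ℕ) :
    ∑ j ∈ range N, (1 : ℝ) / (1 + j) ≤ 1 + log N := by
  simpa [harmonic, add_comm] using harmonic_le_one_add_log N

end Counting

theorem one_lt_log_natCast {n : ℕ} (hn : 3 ≤ n) : 1 < log n := by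
  rw [lt_log_iff_exp_lt (by positivity)]
  have : (3 : ℝ) ≤ n := by exact_mod_cast hn
  linarith [exp_one_lt_three]

section PrimeReciprocals

variable {n L : ℕ}

theorem mem_calL {ℓ : ℕ} : ℓ ∈ calL n L ↔ (L < ℓ ∧ ℓ ≤ 2 * L) ∧ ℓ.Prime ∧ ℓ.Coprime n := by
  rw [calL, mem_filter, mem_Ioc]

theorem mul_inv_mem_calW {k ℓ : ℕ} (hk : k ∈ Icc 1 L) (hℓ : ℓ ∈ calL n L) :
    (k : ZMod n) * (ℓ : ZMod n)⁻¹ ∈ calW n L :=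
  mem_image.2 ⟨(k, ℓ), mk_mem_product hk hℓ, rfl⟩

theorem card_calL_le (n L : ℕ) : #(calL n L) ≤ L :=
  (card_filter_le _ _).trans (by rw [Nat.card_Ioc]; lia)

variable [NeZero n]

theorem calW_eq_univ (hL : n ≤ L) (hne : (calL n L).Nonempty) : calW n L = univ := by
  obtain ⟨ℓ, hℓ⟩ := hne
  refine eq_univ_of_forall fun x => ?_
  set k := (x * ℓ - 1).val + 1
  have hk : k ∈ Icc 1 L := mem_Icc.2 ⟨by lia, (ZMod.val_lt _).trans_le hL⟩
  have hx : (k : ZMod n) * (ℓ : ZMod n)⁻¹ = x := by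
    rw [Nat.cast_succ, ZMod.natCast_zmod_val, sub_add_cancel, mul_assoc,
      ZMod.coe_mul_inv_eq_one ℓ (mem_calL.1 hℓ).2.2, mul_one]
  exact hx ▸ mul_inv_mem_calW hk hℓ

theorem valMinAbs_sq_sub_ne_zero {a : ZMod n} (ha : a ≠ 0) (j : ℕ) :
    a.valMinAbs ^ 2 - (j * n : ℤ) ^ 2 ≠ 0 := by
  have hpos : 0 < a.valMinAbs.natAbs := by simpa [Int.natAbs_pos, ZMod.valMinAbs_eq_zero] using ha
  have hlt : a.valMinAbs.natAbs < n := by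
    have := two_mul_natAbs_valMinAbs_le a
    lia
  rw [sub_ne_zero, Ne, ← Int.natAbs_eq_iff_sq_eq, ← Nat.cast_mul, Int.natAbs_natCast]
  intro h
  exact (Nat.le_of_dvd hpos ⟨j, by rw [h, mul_comm]⟩).not_gt hlt

theorem natAbs_valMinAbs_sq_sub_le (a : ZMod n) {j : ℕ} (hj : j ≤ n) :
    (a.valMinAbs ^ 2 - (j * n : ℤ) ^ 2).natAbs ≤ n ^ 4 := by
  have shift_le : (j * n) ^ 2 ≤ n ^ 4 := by
    calc
      (j * n) ^ 2 ≤ (n * n) ^ 2 := by gcongr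
      _ = n ^ 4 := by ring
  have residue_le : a.valMinAbs.natAbs ^ 2 ≤ n ^ 4 := by
    have : a.valMinAbs.natAbs ≤ n := by linarith [two_mul_natAbs_valMinAbs_le a]
    calc
      a.valMinAbs.natAbs ^ 2 ≤ n ^ 2 := by gcongr
      _ ≤ n ^ 4 := Nat.pow_le_pow_right (NeZero.pos n) (by norm_num)
  zify at shift_le residue_le ⊢
  rw [sq_abs] at residue_le
  exact abs_sub_le_of_nonneg_of_le (sq_nonneg _) residue_le (sq_nonneg _) shift_le

theorem card_filter_natAbs_carry_eq_le {a : ZMod n} (ha : a ≠ 0) (hL : 1 < L) {j : ℕ}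
    (hj : j ≤ n) : #{ℓ ∈ calL n L | (carry a ℓ).natAbs = j} ≤ 4 * log n / log L := by
  have hne : (a.valMinAbs ^ 2 - (j * n : ℤ) ^ 2).natAbs ≠ 0 :=
    Int.natAbs_ne_zero.2 (valMinAbs_sq_sub_ne_zero ha j)
  have hlog : log (a.valMinAbs ^ 2 - (j * n : ℤ) ^ 2).natAbs ≤ 4 * log n := by
    rw [← Nat.cast_ofNat (n := 4), ← log_pow]
    exact log_le_log (by positivity) (by exact_mod_cast natAbs_valMinAbs_sq_sub_le a hj)
  refine (card_le_log_div_log_of_forall_prime_dvd hL hne fun ℓ hℓ => ?_).trans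
    (div_le_div_of_nonneg_right hlog (log_natCast_nonneg L))
  obtain ⟨hℓL, rfl⟩ := mem_filter.1 hℓ
  obtain ⟨⟨hlt, -⟩, hprime, hcoprime⟩ := mem_calL.1 hℓL
  exact ⟨hprime, hlt.le, Int.natCast_dvd.1 (dvd_valMinAbs_sq_sub_natAbs_carry_mul_sq a hcoprime)⟩

theorem norm_sum_calL_stdAddChar_le (hn : 3 ≤ n) {a : ZMod n} (ha : a ≠ 0) (hL : 1 < L)
    (hLn : L < n) :
    ‖∑ ℓ ∈ calL n L, ∑ k ∈ Icc 1 L, ZMod.stdAddChar (a * ((k : ZMod n) * (ℓ : ZMod n)⁻¹))‖ ≤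
      24 * L * log n ^ 2 / log L := by
  have harmonic_bound : ∑ j ∈ range (L + 1), (1 : ℝ) / (1 + j) ≤ 2 * log n := by
    have := log_le_log (by positivity) (Nat.cast_le (α := ℝ).2 hLn)
    linarith [sum_range_one_div_one_add_le (L + 1), one_lt_log_natCast hn]
  calc
    _ ≤ ∑ ℓ ∈ calL n L, 3 * L * ((1 : ℝ) / (1 + (carry a ℓ).natAbs)) :=
      norm_sum_le_of_le _ fun ℓ hℓ =>
        norm_sum_stdAddChar_mul_mul_inv_le a (mem_calL.1 hℓ).2.2 (mem_calL.1 hℓ).1.2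
    _ = 3 * L * ∑ ℓ ∈ calL n L, (1 : ℝ) / (1 + (carry a ℓ).natAbs) := (mul_sum _ _ _).symm
    _ ≤ 3 * L * (4 * log n / log L * ∑ j ∈ range (L + 1), (1 : ℝ) / (1 + j)) := by
      gcongr
      refine sum_comp_le_mul_sum (g := fun j : ℕ => 1 / (1 + (j : ℝ))) (fun ℓ hℓ => ?_)
        (fun j _ => by positivity) fun j hj => card_filter_natAbs_carry_eq_le ha hL ?_
      · have := two_mul_natAbs_carry_le a (mem_calL.1 hℓ).2.2
        have := (mem_calL.1 hℓ).1.2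
        rw [mem_range]
        lia
      · exact (Nat.lt_succ_iff.1 (mem_range.1 hj)).trans hLn.le
    _ ≤ 3 * L * (4 * log n / log L * (2 * log n)) := by gcongr
    _ = 24 * L * log n ^ 2 / log L := by ring

end PrimeReciprocals

section Representation

variable {n L : ℕ} {S T : Finset (ZMod n)}

theorem exists_eq_add_add_of_lt_sqrt_card_mul_card (hn : 3 ≤ n) (hL : 1 < L) (hLn : L < n)
    (hcard : 24 * n * log n ^ 2 / log L < √(#S * #T) * #(calL n L)) (u : ZMod n) :
    ∃ s ∈ S, ∃ t ∈ T, ∃ w ∈ calW n L, u = s + t + w := by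
  have : NeZero n := ⟨by lia⟩
  have char_bound (ψ : AddChar (ZMod n) ℂ) (hψ : ψ ≠ 0) :
      ‖∑ p ∈ calL n L ×ˢ Icc 1 L, ψ ((p.2 : ZMod n) * (p.1 : ZMod n)⁻¹)‖ ≤
        24 * L * log n ^ 2 / log L := by
    obtain ⟨a, ha, hψa⟩ := exists_eq_stdAddChar_mul hψ
    simp only [hψa, sum_product]
    exact norm_sum_calL_stdAddChar_le hn ha hL hLn
  have hcard_prod : 24 * L * log n ^ 2 / log L * Fintype.card (ZMod n) <
      √(#S * #T) * #(calL n L ×ˢ Icc 1 L) := by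
    rw [ZMod.card, card_product, Nat.card_Icc, add_tsub_cancel_right, Nat.cast_mul]
    calc
      _ = L * (24 * n * log n ^ 2 / log L) := by ring
      _ < L * (√(#S * #T) * #(calL n L)) := by gcongr
      _ = _ := by ring
  obtain ⟨s, hs, t, ht, p, hp, hu⟩ :=
    exists_eq_add_add_of_norm_sum_addChar_le (by positivity) char_bound hcard_prod u
  obtain ⟨hℓ, hk⟩ := mem_product.1 hp
  exact ⟨s, hs, t, ht, _, mul_inv_mem_calW hk hℓ, hu⟩

theorem mul_log_lt_of_lt_sqrt_card_mul_card (hn : 3 ≤ n)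
    (hcard : 24 * n * log n ^ 2 / log (log n) < √(#S * #T) * #(calL n L)) : 24 * log n < L := by
  have : NeZero n := ⟨by lia⟩
  have hlog := one_lt_log_natCast hn
  have card_le (A : Finset (ZMod n)) : #A ≤ n := (card_le_univ A).trans_eq (ZMod.card n)
  have sqrt_le : √(#S * #T) ≤ n := by
    rw [← sqrt_mul_self (Nat.cast_nonneg (α := ℝ) n)]
    gcongr <;> exact card_le _
  have loglog_le : log (log n) ≤ log n := log_le_self (by linarith)
  have log_le : log n ≤ log n ^ 2 / log (log n) := by
    rw [le_div_iff₀ (log_pos hlog), sq]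
    gcongr
  refine lt_of_mul_lt_mul_left (a := (n : ℝ)) ?_ n.cast_nonneg
  calc
    n * (24 * log n) ≤ n * (24 * (log n ^ 2 / log (log n))) := by gcongr
    _ = 24 * n * log n ^ 2 / log (log n) := by ring
    _ < √(#S * #T) * #(calL n L) := hcard
    _ ≤ n * L := by
      gcongr
      exact card_calL_le n L

theorem every_residue_represented_general (hn : 3 ≤ n)
    (hcard : 24 * n * log n ^ 2 / log (log n) < √(#S * #T) * #(calL n L)) (u : ZMod n) :
    ∃ s ∈ S, ∃ t ∈ T, ∃ w ∈ calW n L, u = s + t + w := by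
  have : NeZero n := ⟨by lia⟩
  have hlog := one_lt_log_natCast hn
  have loglog_pos : 0 < log (log n) := log_pos hlog
  have mul_log_lt := mul_log_lt_of_lt_sqrt_card_mul_card hn hcard
  rcases lt_or_ge L n with hLn | hLn
  · refine exists_eq_add_add_of_lt_sqrt_card_mul_card hn ?_ hLn (lt_of_le_of_lt ?_ hcard) u
    · exact_mod_cast (by linarith : (1 : ℝ) < L)
    · gcongr
      linarith
  · have card_pos : 0 < √(#S * #T) * (#(calL n L) : ℝ) := lt_of_le_of_lt (by positivity) hcard
    have sqrt_pos : 0 < √(#S * #T : ℝ) := pos_of_mul_pos_left card_pos (Nat.cast_nonneg _)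
    have card_mul_pos : 0 < #S * #T := by exact_mod_cast Real.sqrt_pos.1 sqrt_pos
    obtain ⟨s, hs⟩ := Finset.card_pos.1 (Nat.pos_of_mul_pos_right card_mul_pos)
    obtain ⟨t, ht⟩ := Finset.card_pos.1 (Nat.pos_of_mul_pos_left card_mul_pos)
    have hne : (calL n L).Nonempty :=
      Finset.card_pos.1 (by exact_mod_cast pos_of_mul_pos_right card_pos sqrt_pos.le)
    exact ⟨s, hs, t, ht, u - s - t, calW_eq_univ hLn hne ▸ mem_univ _, by abel⟩

end Representation

/-- There exist `c₀ > 0` and `n₀` such that for every `n ≥ n₀`, every positive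
integer `L < 0.5·n^{1/2}`, and every `S ⊆ Z_n` with
`#S · #𝓛 > c₀ · n (log n)² / log log n`, every `u ∈ Z_n` can be written as
`u = s + t + w` with `s, t ∈ S` and `w ∈ W`; in particular `W + S + S = Z_n`. -/
theorem every_residue_represented :
    ∃ c₀ : ℝ, c₀ > 0 ∧ ∃ n₀ : ℕ, ∀ n : ℕ, n₀ ≤ n →
      ∀ L : ℕ, 0 < L → (L : ℝ) < 0.5 * Real.sqrt n →
        ∀ S : Finset (ZMod n),
          (S.card : ℝ) * ((calL n L).card : ℝ) >
              c₀ * n * (Real.log n) ^ 2 / Real.log (Real.log n) →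
            ∀ u : ZMod n, ∃ s ∈ S, ∃ t ∈ S, ∃ w ∈ calW n L, u = s + t + w := by
  refine ⟨24, by norm_num, 3, fun n hn L _ _ S hcard u => ?_⟩
  exact every_residue_represented_general hn (by rwa [sqrt_mul_self (Nat.cast_nonneg _)]) u
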